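/- arXiv:1310.1781 — 2 statements merged into one kernel-verified Lean document; each statement's English description precedes it below -/
import Mathlib

section
/- Let Γ : ℝ² → ℝ be smooth and suppose (u1, u2, v1, v2) satisfies the combined system: ∂ₜm1 + ∂ₓ(Γ m1) + n2(g1 g2 − Γ) + m1(f2 g2 + 2 f1 g1) = 0, ∂ₜm2 + ∂ₓ(Γ m2) − n1(g1 g2 − Γ) − m2(f1 g1 + 2 f2 g2) = 0, ∂ₜn1 + ∂ₓ(Γ n1) − m2(f1 f2 − Γ) − n1(f2 g2 + 2 f1 g1) = 0, ∂ₜn2 + ∂ₓ(Γ n2) + m1(f1 f2 − Γ) + n2(f1 g1 + 2 f2 g2) = 0. Then P = m1 n1 + m2 n2 satisfies ∂ₜP + Γ ∂ₓP + 2 (∂ₓΓ) P = 0 identically on ℝ². -/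
/-!
Multiplying the four equations by `n1`, `n2`, `m1`, `m2` respectively and adding, every term
free of derivatives cancels, and the Leibniz rule identifies what is left with
`∂ₜP + Γ ∂ₓP + 2 (∂ₓΓ) P`. The Leibniz rule applies because partial derivatives of smooth
functions are smooth (`contDiff_pX`), so that `m1, m2, n1, n2` are smooth.
-/


/-- Partial derivative with respect to the first (space) variable. -/
noncomputable def pX (f : ℝ × ℝ → ℝ) : ℝ × ℝ → ℝ :=
  fun p => deriv (fun x => f (x, p.2)) p.1

/-- Partial derivative with respect to the second (time) variable. -/
noncomputable def pT (f : ℝ × ℝ → ℝ) : ℝ × ℝ → ℝ :=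
  fun p => deriv (fun t => f (p.1, t)) p.2

theorem contDiff_pX {f : ℝ × ℝ → ℝ} (hf : ContDiff ℝ (⊤ : ℕ∞) f) :
    ContDiff ℝ (⊤ : ℕ∞) (pX f) := by
  -- the partial derivative is the Fréchet derivative in the direction `(1, 0)`
  have h : pX f = fun p => fderiv ℝ f p (1, 0) := by
    funext p
    have h1 : HasFDerivAt f (fderiv ℝ f p) (p.1, p.2) :=
      (hf.differentiable (by simp) p).hasFDerivAt
    exact (h1.comp_hasDerivAt p.1 ((hasDerivAt_id p.1).prodMk (hasDerivAt_const p.1 p.2))).deriv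
  rw [h]
  exact (hf.fderiv_right (m := (⊤ : ℕ∞)) (by simp)).clm_apply contDiff_const

theorem contDiff_sub_pX_pX {f : ℝ × ℝ → ℝ} (hf : ContDiff ℝ (⊤ : ℕ∞) f) :
    ContDiff ℝ (⊤ : ℕ∞) (fun p => f p - pX (pX f) p) :=
  hf.sub (contDiff_pX (contDiff_pX hf))

theorem differentiableAt_slice_fst {f : ℝ × ℝ → ℝ} (hf : ContDiff ℝ (⊤ : ℕ∞) f) (p : ℝ × ℝ) :
    DifferentiableAt ℝ (fun x => f (x, p.2)) p.1 := by
  have h : Differentiable ℝ f := hf.differentiable (by simp)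
  fun_prop

theorem differentiableAt_slice_snd {f : ℝ × ℝ → ℝ} (hf : ContDiff ℝ (⊤ : ℕ∞) f) (p : ℝ × ℝ) :
    DifferentiableAt ℝ (fun t => f (p.1, t)) p.2 := by
  have h : Differentiable ℝ f := hf.differentiable (by simp)
  fun_prop

theorem pX_mul {f g : ℝ × ℝ → ℝ} (hf : ContDiff ℝ (⊤ : ℕ∞) f) (hg : ContDiff ℝ (⊤ : ℕ∞) g)
    (p : ℝ × ℝ) : pX (fun q => f q * g q) p = pX f p * g p + f p * pX g p :=
  deriv_fun_mul (differentiableAt_slice_fst hf p) (differentiableAt_slice_fst hg p)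

theorem pT_mul {f g : ℝ × ℝ → ℝ} (hf : ContDiff ℝ (⊤ : ℕ∞) f) (hg : ContDiff ℝ (⊤ : ℕ∞) g)
    (p : ℝ × ℝ) : pT (fun q => f q * g q) p = pT f p * g p + f p * pT g p :=
  deriv_fun_mul (differentiableAt_slice_snd hf p) (differentiableAt_slice_snd hg p)

theorem pX_add {f g : ℝ × ℝ → ℝ} (hf : ContDiff ℝ (⊤ : ℕ∞) f) (hg : ContDiff ℝ (⊤ : ℕ∞) g)
    (p : ℝ × ℝ) : pX (fun q => f q + g q) p = pX f p + pX g p :=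
  deriv_fun_add (differentiableAt_slice_fst hf p) (differentiableAt_slice_fst hg p)

theorem pT_add {f g : ℝ × ℝ → ℝ} (hf : ContDiff ℝ (⊤ : ℕ∞) f) (hg : ContDiff ℝ (⊤ : ℕ∞) g)
    (p : ℝ × ℝ) : pT (fun q => f q + g q) p = pT f p + pT g p :=
  deriv_fun_add (differentiableAt_slice_snd hf p) (differentiableAt_slice_snd hg p)

theorem stmt_7
    (u1 u2 v1 v2 Γ : ℝ × ℝ → ℝ)
    (hu1 : ContDiff ℝ (⊤ : ℕ∞) u1) (hu2 : ContDiff ℝ (⊤ : ℕ∞) u2)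
    (hv1 : ContDiff ℝ (⊤ : ℕ∞) v1) (hv2 : ContDiff ℝ (⊤ : ℕ∞) v2)
    (hΓ : ContDiff ℝ (⊤ : ℕ∞) Γ)
    (m1 m2 n1 n2 f1 f2 g1 g2 : ℝ × ℝ → ℝ)
    (hm1 : m1 = fun p => u1 p - pX (pX u1) p)
    (hm2 : m2 = fun p => u2 p - pX (pX u2) p)
    (hn1 : n1 = fun p => v1 p - pX (pX v1) p)
    (hn2 : n2 = fun p => v2 p - pX (pX v2) p)
    (hf1 : f1 = fun p => u2 p - pX v1 p)
    (hf2 : f2 = fun p => u1 p + pX v2 p)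
    (hg1 : g1 = fun p => v2 p + pX u1 p)
    (hg2 : g2 = fun p => v1 p - pX u2 p)
    (hsys : ∀ p : ℝ × ℝ,
        pT m1 p + pX (fun q => Γ q * m1 q) p + n2 p * (g1 p * g2 p - Γ p)
          + m1 p * (f2 p * g2 p + 2 * f1 p * g1 p) = 0 ∧
        pT m2 p + pX (fun q => Γ q * m2 q) p - n1 p * (g1 p * g2 p - Γ p)
          - m2 p * (f1 p * g1 p + 2 * f2 p * g2 p) = 0 ∧
        pT n1 p + pX (fun q => Γ q * n1 q) p - m2 p * (f1 p * f2 p - Γ p)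
          - n1 p * (f2 p * g2 p + 2 * f1 p * g1 p) = 0 ∧
        pT n2 p + pX (fun q => Γ q * n2 q) p + m1 p * (f1 p * f2 p - Γ p)
          + n2 p * (f1 p * g1 p + 2 * f2 p * g2 p) = 0)
    (P : ℝ × ℝ → ℝ)
    (hP : P = fun q => m1 q * n1 q + m2 q * n2 q) :
    ∀ p : ℝ × ℝ, pT P p + Γ p * pX P p + 2 * pX Γ p * P p = 0 := by
  intro p
  have cm1 : ContDiff ℝ (⊤ : ℕ∞) m1 := hm1 ▸ contDiff_sub_pX_pX hu1
  have cm2 : ContDiff ℝ (⊤ : ℕ∞) m2 := hm2 ▸ contDiff_sub_pX_pX hu2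
  have cn1 : ContDiff ℝ (⊤ : ℕ∞) n1 := hn1 ▸ contDiff_sub_pX_pX hv1
  have cn2 : ContDiff ℝ (⊤ : ℕ∞) n2 := hn2 ▸ contDiff_sub_pX_pX hv2
  obtain ⟨e1, e2, e3, e4⟩ := hsys p
  rw [pX_mul hΓ cm1] at e1
  rw [pX_mul hΓ cm2] at e2
  rw [pX_mul hΓ cn1] at e3
  rw [pX_mul hΓ cn2] at e4
  have hX : pX P p = pX m1 p * n1 p + m1 p * pX n1 p + (pX m2 p * n2 p + m2 p * pX n2 p) := by
    rw [hP, pX_add (cm1.mul cn1) (cm2.mul cn2), pX_mul cm1 cn1, pX_mul cm2 cn2]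
  have hT : pT P p = pT m1 p * n1 p + m1 p * pT n1 p + (pT m2 p * n2 p + m2 p * pT n2 p) := by
    rw [hP, pT_add (cm1.mul cn1) (cm2.mul cn2), pT_mul cm1 cn1, pT_mul cm2 cn2]
  have hPp : P p = m1 p * n1 p + m2 p * n2 p := by rw [hP]
  rw [hX, hT, hPp]
  linear_combination n1 p * e1 + n2 p * e2 + m1 p * e3 + m2 p * e4
end

section
/- Let λ ∈ ℝ, let V = (V_{ij}) be a 3×3 matrix of smooth real functions on ℝ², and let Φ = (φ1, φ2, φ3) : ℝ² → ℝ³ be smooth with φ3 nowhere vanishing, satisfying ∂ₓφ1 = λ m1 φ2 + φ3, ∂ₓφ2 = λ n1 φ1 + λ m2 φ3, ∂ₓφ3 = φ1 + λ n2 φ2, together with ∂ₜΦ = V Φ. Set α = φ1/φ3, β = φ2/φ3 and ρ̂ = α + λ n2 β. Then: (i) ∂ₓφ3 = ρ̂ φ3; (ii) ∂ₓα = λ m1 β + 1 − α ρ̂; (iii) ∂ₓβ = λ n1 α + λ m2 − β ρ̂; (iv) ∂ₜρ̂ = ∂ₓ(V₃₁ α + V₃₂ β + V₃₃) identically on ℝ².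 -/
theorem hasDerivAt_pX {f : ℝ × ℝ → ℝ} {p : ℝ × ℝ} (hf : DifferentiableAt ℝ f p) :
    HasDerivAt (fun x => f (x, p.2)) (fderiv ℝ f p (1, 0)) p.1 :=
  HasFDerivAt.comp_hasDerivAt (l := f) (f := fun x => (x, p.2)) p.1 hf.hasFDerivAt
    ((hasDerivAt_id p.1).prodMk (hasDerivAt_const p.1 p.2))

theorem hasDerivAt_pT {f : ℝ × ℝ → ℝ} {p : ℝ × ℝ} (hf : DifferentiableAt ℝ f p) :
    HasDerivAt (fun t => f (p.1, t)) (fderiv ℝ f p (0, 1)) p.2 :=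
  HasFDerivAt.comp_hasDerivAt (l := f) (f := fun t => (p.1, t)) p.2 hf.hasFDerivAt
    ((hasDerivAt_const p.2 p.1).prodMk (hasDerivAt_id p.2))

theorem pX_eq_fderiv {f : ℝ × ℝ → ℝ} {p : ℝ × ℝ} (hf : DifferentiableAt ℝ f p) :
    pX f p = fderiv ℝ f p (1, 0) :=
  (hasDerivAt_pX hf).deriv

theorem pT_eq_fderiv {f : ℝ × ℝ → ℝ} {p : ℝ × ℝ} (hf : DifferentiableAt ℝ f p) :
    pT f p = fderiv ℝ f p (0, 1) :=
  (hasDerivAt_pT hf).deriv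

theorem pX_div {f g : ℝ × ℝ → ℝ} {p : ℝ × ℝ} (hf : DifferentiableAt ℝ f p)
    (hg : DifferentiableAt ℝ g p) (h0 : g p ≠ 0) :
    pX (fun q => f q / g q) p = (pX f p * g p - f p * pX g p) / g p ^ 2 := by
  rw [pX_eq_fderiv hf, pX_eq_fderiv hg]
  exact ((hasDerivAt_pX hf).div (hasDerivAt_pX hg) h0).deriv

theorem pT_div {f g : ℝ × ℝ → ℝ} {p : ℝ × ℝ} (hf : DifferentiableAt ℝ f p)
    (hg : DifferentiableAt ℝ g p) (h0 : g p ≠ 0) :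
    pT (fun q => f q / g q) p = (pT f p * g p - f p * pT g p) / g p ^ 2 := by
  rw [pT_eq_fderiv hf, pT_eq_fderiv hg]
  exact ((hasDerivAt_pT hf).div (hasDerivAt_pT hg) h0).deriv

theorem differentiable_fderiv_apply {f : ℝ × ℝ → ℝ} (hf : ContDiff ℝ 2 f) (v : ℝ × ℝ) :
    Differentiable ℝ (fun p => fderiv ℝ f p v) :=
  ((hf.fderiv_right (m := 1) (by norm_num)).differentiable (by norm_num)).clm_apply
    (differentiable_const v)

theorem pX_eq_fderiv_fun {f : ℝ × ℝ → ℝ} (hf : ContDiff ℝ 2 f) :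
    pX f = fun p => fderiv ℝ f p (1, 0) :=
  funext fun p => pX_eq_fderiv (hf.differentiable (by norm_num) p)

theorem pT_eq_fderiv_fun {f : ℝ × ℝ → ℝ} (hf : ContDiff ℝ 2 f) :
    pT f = fun p => fderiv ℝ f p (0, 1) :=
  funext fun p => pT_eq_fderiv (hf.differentiable (by norm_num) p)

theorem pT_pX_comm {f : ℝ × ℝ → ℝ} (hf : ContDiff ℝ 2 f) (p : ℝ × ℝ) :
    pT (pX f) p = pX (pT f) p := by
  have hd : DifferentiableAt ℝ (fderiv ℝ f) p :=
    (hf.fderiv_right (m := 1) (by norm_num)).differentiable (by norm_num) p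
  have hsymm : IsSymmSndFDerivAt ℝ f p := hf.contDiffAt.isSymmSndFDerivAt (by simp)
  rw [pX_eq_fderiv_fun hf, pT_eq_fderiv_fun hf, pT_eq_fderiv (differentiable_fderiv_apply hf _ p),
    pX_eq_fderiv (differentiable_fderiv_apply hf _ p),
    fderiv_clm_apply hd (differentiableAt_const _), fderiv_clm_apply hd (differentiableAt_const _)]
  simpa using hsymm (0, 1) (1, 0)

/-- Equality of the mixed partials of `log |f|`, for `f` nowhere zero. -/
theorem pT_logDeriv_eq {f : ℝ × ℝ → ℝ} (hf : ContDiff ℝ 2 f) (h0 : ∀ p, f p ≠ 0) (p : ℝ × ℝ) :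
    pT (fun q => pX f q / f q) p = pX (fun q => pT f q / f q) p := by
  have hd := hf.differentiable (by norm_num) p
  have hX : DifferentiableAt ℝ (pX f) p := by
    rw [pX_eq_fderiv_fun hf]; exact differentiable_fderiv_apply hf _ p
  have hT : DifferentiableAt ℝ (pT f) p := by
    rw [pT_eq_fderiv_fun hf]; exact differentiable_fderiv_apply hf _ p
  rw [pT_div hX hd (h0 p), pX_div hT hd (h0 p), pT_pX_comm hf]
  ring

theorem stmt_11
    (m1 m2 n1 n2 : ℝ × ℝ → ℝ)
    (hm1 : ContDiff ℝ (⊤ : ℕ∞) m1) (hm2 : ContDiff ℝ (⊤ : ℕ∞) m2)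
    (hn1 : ContDiff ℝ (⊤ : ℕ∞) n1) (hn2 : ContDiff ℝ (⊤ : ℕ∞) n2)
    (lam : ℝ)
    (V : ℝ × ℝ → Matrix (Fin 3) (Fin 3) ℝ)
    (hV : ∀ i j : Fin 3, ContDiff ℝ (⊤ : ℕ∞) (fun p => V p i j))
    (φ1 φ2 φ3 : ℝ × ℝ → ℝ)
    (hφ1 : ContDiff ℝ (⊤ : ℕ∞) φ1) (hφ2 : ContDiff ℝ (⊤ : ℕ∞) φ2) (hφ3 : ContDiff ℝ (⊤ : ℕ∞) φ3)
    (hφ3ne : ∀ p : ℝ × ℝ, φ3 p ≠ 0)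
    (hx1 : ∀ p : ℝ × ℝ, pX φ1 p = lam * m1 p * φ2 p + φ3 p)
    (hx2 : ∀ p : ℝ × ℝ, pX φ2 p = lam * n1 p * φ1 p + lam * m2 p * φ3 p)
    (hx3 : ∀ p : ℝ × ℝ, pX φ3 p = φ1 p + lam * n2 p * φ2 p)
    (ht1 : ∀ p : ℝ × ℝ, pT φ1 p = V p 0 0 * φ1 p + V p 0 1 * φ2 p + V p 0 2 * φ3 p)
    (ht2 : ∀ p : ℝ × ℝ, pT φ2 p = V p 1 0 * φ1 p + V p 1 1 * φ2 p + V p 1 2 * φ3 p)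
    (ht3 : ∀ p : ℝ × ℝ, pT φ3 p = V p 2 0 * φ1 p + V p 2 1 * φ2 p + V p 2 2 * φ3 p)
    (α β ρ : ℝ × ℝ → ℝ)
    (hα : α = fun p => φ1 p / φ3 p)
    (hβ : β = fun p => φ2 p / φ3 p)
    (hρ : ρ = fun p => α p + lam * n2 p * β p) :
    (∀ p : ℝ × ℝ, pX φ3 p = ρ p * φ3 p) ∧
    (∀ p : ℝ × ℝ, pX α p = lam * m1 p * β p + 1 - α p * ρ p) ∧
    (∀ p : ℝ × ℝ, pX β p = lam * n1 p * α p + lam * m2 p - β p * ρ p) ∧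
    (∀ p : ℝ × ℝ,
      pT ρ p = pX (fun q => V q 2 0 * α q + V q 2 1 * β q + V q 2 2) p) := by
  have h1 : Differentiable ℝ φ1 := hφ1.differentiable (by simp)
  have h2 : Differentiable ℝ φ2 := hφ2.differentiable (by simp)
  have h3 : Differentiable ℝ φ3 := hφ3.differentiable (by simp)
  subst hα hβ hρ
  refine ⟨fun p => ?_, fun p => ?_, fun p => ?_, fun p => ?_⟩
  · have h0 := hφ3ne p
    rw [hx3]
    field_simp
  · have h0 := hφ3ne p
    rw [pX_div (h1 p) (h3 p) h0, hx1, hx3]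
    field_simp
  · have h0 := hφ3ne p
    rw [pX_div (h2 p) (h3 p) h0, hx2, hx3]
    field_simp
  · convert pT_logDeriv_eq (contDiff_infty.1 hφ3 2) hφ3ne p using 2
    · funext q
      have h0 := hφ3ne q
      rw [hx3]
      field_simp
    · funext q
      have h0 := hφ3ne q
      rw [ht3]
      field_simp
end
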